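/- Every extremely abundant number is superabundant. -/

import Mathlib

open Real Finset

noncomputable section

/-- Sum of divisors of `n`. -/
def sigma1 (n : ℕ) : ℕ := n.divisors.sum id

/-- `n` is superabundant if `σ(n)/n > σ(m)/m` for all positive `m < n`. -/
def Superabundant (n : ℕ) : Prop :=
  0 < n ∧ ∀ m : ℕ, 0 < m → m < n → (sigma1 m : ℝ) / m < (sigma1 n : ℝ) / n

/-- Robin's quotient `f(n) = σ(n)/(n log log n)`. -/
def robinF (n : ℕ) : ℝ := (sigma1 n : ℝ) / (n * Real.log (Real.log n))

/-- `n` is extremely abundant. -/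
def ExtremelyAbundant (n : ℕ) : Prop :=
  n = 10080 ∨ (10080 < n ∧ ∀ m : ℕ, 10080 ≤ m → m < n → robinF m < robinF n)

theorem sigma1_eq_sigma (n : ℕ) : sigma1 n = ArithmeticFunction.sigma 1 n :=
  (ArithmeticFunction.sigma_one_apply n).symm

theorem sigma1_mul_of_coprime {m n : ℕ} (h : m.Coprime n) :
    sigma1 (m * n) = sigma1 m * sigma1 n := by
  simp only [sigma1_eq_sigma]
  exact ArithmeticFunction.isMultiplicative_sigma.map_mul_of_coprime h

theorem sigma1_prime_pow {p : ℕ} (hp : p.Prime) (a : ℕ) :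
    sigma1 (p ^ a) = ∑ i ∈ range (a + 1), p ^ i := by
  rw [sigma1, Nat.sum_divisors_prime_pow hp]
  rfl

theorem sigma1_prime_mul_le {p : ℕ} (hp : p.Prime) (n : ℕ) :
    sigma1 (p * n) ≤ (p + 1) * sigma1 n := by
  have hsub : (p * n).divisors ⊆ n.divisors ∪ n.divisors.image (p * ·) := by
    intro d hd
    obtain ⟨hdvd, h0⟩ := Nat.mem_divisors.mp hd
    have hn : n ≠ 0 := right_ne_zero_of_mul h0
    rw [mem_union, mem_image]
    by_cases hpd : p ∣ d
    · obtain ⟨e, rfl⟩ := hpd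
      exact .inr ⟨e, Nat.mem_divisors.mpr ⟨Nat.dvd_of_mul_dvd_mul_left hp.pos hdvd, hn⟩, rfl⟩
    · have hcop : d.Coprime p := ((Nat.Prime.coprime_iff_not_dvd hp).mpr hpd).symm
      exact .inl (Nat.mem_divisors.mpr ⟨hcop.dvd_of_dvd_mul_left hdvd, hn⟩)
  calc sigma1 (p * n)
      ≤ ∑ d ∈ n.divisors ∪ n.divisors.image (p * ·), d := sum_le_sum_of_subset hsub
    _ ≤ ∑ d ∈ n.divisors, d + ∑ d ∈ n.divisors.image (p * ·), d := by
        rw [← sum_union_inter]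
        exact Nat.le_add_right _ _
    _ ≤ ∑ d ∈ n.divisors, d + ∑ d ∈ n.divisors, p * d := by
        gcongr
        exact sum_image_le_of_nonneg (f := fun d => d) (fun _ _ => Nat.zero_le _)
    _ = (p + 1) * sigma1 n := by
        rw [← mul_sum, sigma1]
        simp only [id]
        ring

/-- A number `k` whose prime factors are all at least `p` has `σ(k)/k ≤ ((p + 1)/p) ^ j` for
some `j` with `p ^ j ≤ k`. -/
theorem exists_pow_le_and_sigma1_mul_pow_le {p k : ℕ} (h0 : k ≠ 0)
    (hk : ∀ q, q.Prime → q ∣ k → p ≤ q) :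
    ∃ j, p ^ j ≤ k ∧ sigma1 k * p ^ j ≤ (p + 1) ^ j * k := by
  induction k using induction_on_primes with
  | zero => exact absurd rfl h0
  | one => exact ⟨0, by simp, by simp [sigma1]⟩
  | prime_mul q k hq ih =>
    obtain ⟨j, hj, hs⟩ := ih (right_ne_zero_of_mul h0)
      fun r hr hrk => hk r hr (dvd_mul_of_dvd_right hrk q)
    have hpq : p ≤ q := hk q hq (dvd_mul_right q k)
    refine ⟨j + 1, ?_, ?_⟩
    · rw [pow_succ, mul_comm]
      exact Nat.mul_le_mul hpq hj
    · calc sigma1 (q * k) * p ^ (j + 1)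
          ≤ ((q + 1) * sigma1 k) * p ^ (j + 1) := by
            gcongr
            exact sigma1_prime_mul_le hq k
        _ = ((q + 1) * p) * (sigma1 k * p ^ j) := by ring
        _ ≤ ((p + 1) * q) * ((p + 1) ^ j * k) := by
            gcongr ?_ * ?_
            linarith
        _ = (p + 1) ^ (j + 1) * (q * k) := by ring

theorem exists_eq_pow_mul_coprime {p n : ℕ} (hp : p.Prime) (hn : n ≠ 0) :
    ∃ a k, n = p ^ a * k ∧ ¬ p ∣ k ∧ k ≠ 0 ∧
      sigma1 n = (∑ i ∈ range (a + 1), p ^ i) * sigma1 k := by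
  obtain ⟨a, k, hpk, rfl⟩ := Nat.exists_eq_pow_mul_and_not_dvd hn p hp.ne_one
  refine ⟨a, k, rfl, hpk, right_ne_zero_of_mul hn, ?_⟩
  rw [sigma1_mul_of_coprime (((Nat.Prime.coprime_iff_not_dvd hp).mpr hpk).pow_left a),
    sigma1_prime_pow hp]

theorem sigma_bound_of_lt_10080 : ∀ a ∈ range 14, ∀ b ∈ range 9, 2 ^ a * 3 ^ b < 10080 →
    ∀ c ∈ range 6, 2 ^ a * 3 ^ b * 5 ^ c < 10080 → ∀ d ∈ range 5, 2 ^ a * 3 ^ b * 5 ^ c * 7 ^ d < 10080 →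
    ∀ j ∈ range 4, 2 ^ a * 3 ^ b * 5 ^ c * 7 ^ d * 11 ^ j < 10080 →
    10 * ((∑ i ∈ range (a + 1), 2 ^ i) * (∑ i ∈ range (b + 1), 3 ^ i) *
      (∑ i ∈ range (c + 1), 5 ^ i) * (∑ i ∈ range (d + 1), 7 ^ i) * 12 ^ j) <
    39 * (2 ^ a * 3 ^ b * 5 ^ c * 7 ^ d * 11 ^ j) := by
  decide +kernel

theorem ten_mul_sigma1_lt {m : ℕ} (h0 : m ≠ 0) (hm : m < 10080) : 10 * sigma1 m < 39 * m := by
  obtain ⟨a, k₂, rfl, h₂, hk₂, hs₂⟩ := exists_eq_pow_mul_coprime Nat.prime_two h0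
  obtain ⟨b, k₃, rfl, h₃, hk₃, hs₃⟩ := exists_eq_pow_mul_coprime Nat.prime_three hk₂
  obtain ⟨c, k₅, rfl, h₅, hk₅, hs₅⟩ := exists_eq_pow_mul_coprime Nat.prime_five hk₃
  obtain ⟨d, k, rfl, h₇, hk, hs₇⟩ := exists_eq_pow_mul_coprime Nat.prime_seven hk₅
  have hrough : ∀ q, q.Prime → q ∣ k → 11 ≤ q := by
    intro q hq hqk
    by_contra! hlt
    interval_cases q <;> first
      | exact h₇ hqk
      | exact h₅ (dvd_mul_of_dvd_right hqk _)
      | exact h₃ (dvd_mul_of_dvd_right (dvd_mul_of_dvd_right hqk _) _)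
      | exact h₂ (dvd_mul_of_dvd_right (dvd_mul_of_dvd_right (dvd_mul_of_dvd_right hqk _) _) _)
      | exact absurd hq (by norm_num)
  obtain ⟨j, hj, hs⟩ := exists_pow_le_and_sigma1_mul_pow_le hk hrough
  rw [hs₂, hs₃, hs₅, hs₇]
  have hprod : 2 ^ a * 3 ^ b * 5 ^ c * 7 ^ d * 11 ^ j < 10080 := by
    refine lt_of_le_of_lt ?_ hm
    simp only [← mul_assoc]
    gcongr
  have of_dvd {x : ℕ} (hx : x ∣ 2 ^ a * 3 ^ b * 5 ^ c * 7 ^ d * 11 ^ j) : x < 10080 :=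
    (Nat.le_of_dvd (by positivity) hx).trans_lt hprod
  have mem_range_of_dvd (p : ℕ) {e B : ℕ} (hp : 1 < p) (hB : 10080 ≤ p ^ B)
      (he : p ^ e ∣ 2 ^ a * 3 ^ b * 5 ^ c * 7 ^ d * 11 ^ j) :
      e ∈ range B :=
    mem_range.mpr <| (Nat.pow_lt_pow_iff_right hp).mp ((of_dvd he).trans_le hB)
  have hbound := sigma_bound_of_lt_10080
    a (mem_range_of_dvd 2 (by norm_num) (by norm_num) ⟨3 ^ b * 5 ^ c * 7 ^ d * 11 ^ j, by ring⟩)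
    b (mem_range_of_dvd 3 (by norm_num) (by norm_num) ⟨2 ^ a * 5 ^ c * 7 ^ d * 11 ^ j, by ring⟩)
    (of_dvd ⟨5 ^ c * 7 ^ d * 11 ^ j, by ring⟩)
    c (mem_range_of_dvd 5 (by norm_num) (by norm_num) ⟨2 ^ a * 3 ^ b * 7 ^ d * 11 ^ j, by ring⟩)
    (of_dvd ⟨7 ^ d * 11 ^ j, by ring⟩)
    d (mem_range_of_dvd 7 (by norm_num) (by norm_num) ⟨2 ^ a * 3 ^ b * 5 ^ c * 11 ^ j, by ring⟩)
    (of_dvd ⟨11 ^ j, by ring⟩)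
    j (mem_range_of_dvd 11 (by norm_num) (by norm_num) ⟨2 ^ a * 3 ^ b * 5 ^ c * 7 ^ d, by ring⟩)
    hprod
  generalize (∑ i ∈ range (a + 1), 2 ^ i) = A at hbound ⊢
  generalize (∑ i ∈ range (b + 1), 3 ^ i) = B at hbound ⊢
  generalize (∑ i ∈ range (c + 1), 5 ^ i) = C at hbound ⊢
  generalize (∑ i ∈ range (d + 1), 7 ^ i) = D at hbound ⊢
  refine lt_of_mul_lt_mul_right (a := 11 ^ j) ?_ (Nat.zero_le _)
  calc 10 * (A * (B * (C * (D * sigma1 k)))) * 11 ^ j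
      = 10 * (A * B * C * D) * (sigma1 k * 11 ^ j) := by ring
    _ ≤ 10 * (A * B * C * D) * (12 ^ j * k) := by gcongr
    _ = 10 * (A * B * C * D * 12 ^ j) * k := by ring
    _ < 39 * (2 ^ a * 3 ^ b * 5 ^ c * 7 ^ d * 11 ^ j) * k :=
        Nat.mul_lt_mul_of_pos_right hbound (Nat.pos_of_ne_zero hk)
    _ = 39 * (2 ^ a * (3 ^ b * (5 ^ c * (7 ^ d * k)))) * 11 ^ j := by ring

theorem sigma1_10080 : sigma1 10080 = 39312 := by
  decide +kernel

theorem superabundant_10080 : Superabundant 10080 := by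
  refine ⟨by norm_num, fun m h0 hm => ?_⟩
  have h₁ : (10 * sigma1 m : ℝ) < 39 * m := by exact_mod_cast ten_mul_sigma1_lt h0.ne' hm
  have hm0 : (0 : ℝ) < m := by exact_mod_cast h0
  rw [sigma1_10080, div_lt_iff₀ hm0]
  push_cast
  linarith

theorem one_lt_log_natCast {m : ℕ} (hm : 3 ≤ m) : 1 < Real.log m := by
  rw [Real.lt_log_iff_exp_lt (by positivity)]
  have : (3 : ℝ) ≤ m := by exact_mod_cast hm
  linarith [Real.exp_one_lt_three]

theorem sigma1_div_lt_of_robinF_lt {m n : ℕ} (hm : 3 ≤ m) (hmn : m < n)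
    (h : robinF m < robinF n) : (sigma1 m : ℝ) / m < (sigma1 n : ℝ) / n := by
  have hlog := one_lt_log_natCast hm
  have hm0 : (0 : ℝ) < m := by positivity
  have hloglog : 0 < Real.log (Real.log m) := Real.log_pos hlog
  have hmono : Real.log (Real.log m) < Real.log (Real.log n) :=
    Real.log_lt_log (by linarith) (Real.log_lt_log hm0 (by exact_mod_cast hmn))
  have hF : 0 ≤ robinF m := by unfold robinF; positivity
  have key {k : ℕ} (hk : Real.log (Real.log k) ≠ 0) :
      (sigma1 k : ℝ) / k = robinF k * Real.log (Real.log k) := by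
    rw [robinF, ← div_div, div_mul_cancel₀ _ hk]
  rw [key hloglog.ne', key (hloglog.trans hmono).ne']
  exact mul_lt_mul'' h hmono hF hloglog.le

theorem extremely_abundant_is_superabundant (n : ℕ) (h : ExtremelyAbundant n) :
    Superabundant n := by
  rcases h with rfl | ⟨hn, hF⟩
  · exact superabundant_10080
  · have hge (m : ℕ) (hm : 10080 ≤ m) (hmn : m < n) :=
      sigma1_div_lt_of_robinF_lt (by omega) hmn (hF m hm hmn)
    refine ⟨by omega, fun m h0 hmn => ?_⟩
    rcases lt_or_ge m 10080 with hm | hm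
    · exact (superabundant_10080.2 m h0 hm).trans (hge 10080 le_rfl hn)
    · exact hge m hm hmn
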